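/- arXiv:2311.04561 — 3 statements merged into one kernel-verified Lean document; each statement's English description precedes it below -/
import Mathlib

section
/- Suppose 0 ≤ ℓ(w, s i) ≤ B for all w ∈ 𝒲 and all i, suppose P_{W,Z} ≪ P_W ⊗ P_Z, and suppose either (m ≥ 2 and u ≥ 3) or (m ≥ 3 and u ≥ 2). Then for every 0 < δ < 1, with probability at least 1 − δ under the joint law of (W,Z): |R_test(W,Z) − R_train(W,Z)| ≤ sqrt( ( B²·C_{m,u}·(m+u) / (2·(m·u − m − u)) ) · ( log( (1/δ)·sqrt(m·u/(m+u)) ) + ι(W,Z) ) ), where ι(W,Z) denotes the logarithm of the Radon–Nikodym derivative d P_{W,Z} / d (P_W ⊗ P_Z) evaluated at (W,Z) (the information density). -/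
/-!
For a fixed parameter `w`, the gap `f = Rtest - Rtrain` is, up to centring, `±(m + u) / (m u)` times
the sum of a sample drawn without replacement. Revealing the smaller of the two parts of the split
one element at a time and applying Hoeffding's lemma at each step (`sum_perm_exp_le`) shows that `f`
is sub-Gaussian with variance proxy `v = B² C_{m,u} (m + u) / (4 m u)` (`sum_exp_gap_le`).
Integrating the moment generating function against a Gaussian weight gives
`E exp (f² / c) ≤ (1 - 2 v / c)^(-1/2)` (`sum_exp_sq_le`); for the factor
`c = B² C_{m,u} (m + u) / (2 (m u - m - u))` in front of the bound, the right-hand side is exactly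
`K = √(m u / (m + u))`.

To pass to the joint law `P` of `(W, Z)`, note that where the claimed inequality fails one has
`dP/dQ ≤ (δ / K) exp (f² / c)`, with `Q` the product of the marginals. Integrating over `Q` bounds
the probability of failure by `δ`.
-/

open MeasureTheory ProbabilityTheory Real

noncomputable section

/-- The constant `C_{m,u} = 2(m+u)·max(m,u)/((m+u−1/2)·(2·max(m,u)−1))`. -/
def Cmu (m u : ℕ) : ℝ :=
  2 * ((m : ℝ) + u) * max (m : ℝ) u / ((((m : ℝ) + u) - 1/2) * (2 * max (m : ℝ) u - 1))

/-- Transductive training error: average loss over the first `m` indices of the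
sampling sequence `z`. -/
def Rtrain {S W : Type*} (m u : ℕ) (s : Fin (m + u) → S) (ℓ : W → S → ℝ)
    (w : W) (z : Fin (m + u) → Fin (m + u)) : ℝ :=
  (∑ i : Fin (m + u), if (i : ℕ) < m then ℓ w (s (z i)) else 0) / m

/-- Transductive test error: average loss over the last `u` indices of the
sampling sequence `z`. -/
def Rtest {S W : Type*} (m u : ℕ) (s : Fin (m + u) → S) (ℓ : W → S → ℝ)
    (w : W) (z : Fin (m + u) → Fin (m + u)) : ℝ :=
  (∑ i : Fin (m + u), if m ≤ (i : ℕ) then ℓ w (s (z i)) else 0) / u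

instance (n : ℕ) : MeasurableSpace (Equiv.Perm (Fin n)) := ⊤

/-- The uniform distribution on the symmetric group of `Fin n` (sampling without
replacement). -/
def uniformPerm (n : ℕ) : Measure (Equiv.Perm (Fin n)) :=
  letI : Nonempty (Equiv.Perm (Fin n)) := ⟨1⟩
  (PMF.uniformOfFintype (Equiv.Perm (Fin n))).toMeasure

/-- Kullback–Leibler divergence `D_KL(μ ‖ ν) = ∫ log(dμ/dν) dμ`. -/
def klDivR {α : Type*} [MeasurableSpace α] (μ ν : Measure α) : ℝ :=
  ∫ x, llr μ ν x ∂μ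

/-- Mutual information `I(X;Y) = D_KL(P_{X,Y} ‖ P_X ⊗ P_Y)`. -/
def mutInfo {Ω α β : Type*} [MeasurableSpace Ω] [MeasurableSpace α] [MeasurableSpace β]
    (μ : Measure Ω) (X : Ω → α) (Y : Ω → β) : ℝ :=
  klDivR (Measure.map (fun ω => (X ω, Y ω)) μ) ((Measure.map X μ).prod (Measure.map Y μ))

/-- Hoeffding's lemma for the uniform distribution on a finite type, as an inequality between
sums. -/
lemma sum_exp_centered_le {ι : Type*} [Fintype ι] [Nonempty ι] {B : ℝ} (hB : 0 ≤ B)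
    (a : ι → ℝ) (ha : ∀ i, 0 ≤ a i ∧ a i ≤ B) (t : ℝ) :
    ∑ p, exp (t * (a p - (∑ i, a i) / Fintype.card ι))
      ≤ Fintype.card ι * exp (t ^ 2 * B ^ 2 / 8) := by
  let _ : MeasurableSpace ι := ⊤
  have hc : (0 : ℝ) < Fintype.card ι := by exact_mod_cast Fintype.card_pos
  have avg : ∀ g : ι → ℝ, ∫ x, g x ∂(PMF.uniformOfFintype ι).toMeasure
      = (∑ i, g i) / Fintype.card ι := by
    intro g
    rw [PMF.integral_eq_sum, Finset.sum_div]
    refine Finset.sum_congr rfl fun i _ => ?_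
    simp [PMF.uniformOfFintype_apply, div_eq_inv_mul]
  have h := (hasSubgaussianMGF_of_mem_Icc (μ := (PMF.uniformOfFintype ι).toMeasure)
    (X := a) (a := 0) (b := B) (measurable_from_top.aemeasurable)
    (Filter.Eventually.of_forall fun i => ha i)).mgf_le t
  rw [mgf, avg, avg, div_le_iff₀ hc] at h
  refine h.trans_eq ?_
  rw [mul_comm]
  congr 2
  simp only [sub_zero, NNReal.coe_pow, NNReal.coe_div, coe_nnnorm, Real.norm_eq_abs,
    abs_of_nonneg hB, NNReal.coe_ofNat]
  ring

/-- Serfling-type bound for sampling `k` elements without replacement from `M + k`. The elements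
are revealed one at a time: given the first one, the remaining sample is again drawn without
replacement, and the conditional mean moves by `M / (M + k)` times the centred first element, to
which Hoeffding's lemma applies. The resulting variance proxy `∑ (M / j) ^ 2`, `M ≤ j < M + k`, is
bounded through `1 / j ^ 2 ≤ 1 / (j - 1 / 2) - 1 / (j + 1 / 2)`, which telescopes. -/
lemma sum_perm_exp_le {M : ℕ} (hM : 1 ≤ M) {B : ℝ} (hB : 0 ≤ B) (t : ℝ) (k : ℕ) :
    ∀ a : Fin (M + k) → ℝ, (∀ i, 0 ≤ a i ∧ a i ≤ B) →
      ∑ σ : Equiv.Perm (Fin (M + k)),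
        exp (t * ((∑ i : Fin (M + k), if (i : ℕ) < k then a (σ i) else 0)
          - k * (∑ i, a i) / (M + k)))
      ≤ (M + k).factorial *
        exp (t ^ 2 * B ^ 2 / 8 * ((M : ℝ) ^ 2 * k / ((M - 1 / 2) * (M + k - 1 / 2)))) := by
  have hM' : (1 : ℝ) ≤ M := by exact_mod_cast hM
  induction k with
  | zero =>
    intro a _
    simp [Fintype.card_perm]
  | succ k ih =>
    set n := M + k with hn
    have hn' : (n : ℝ) = M + k := by simp [hn]
    have hn1 : (1 : ℝ) ≤ n := by rw [hn']; have : (0 : ℝ) ≤ k := k.cast_nonneg; linarith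
    intro (a : Fin (n + 1) → ℝ) ha
    change ∑ σ : Equiv.Perm (Fin (n + 1)),
      exp (t * ((∑ i : Fin (n + 1), _) - _ * (∑ i, a i) / _)) ≤ ((n + 1).factorial : ℝ) * _
    set T : ℝ := ∑ i, a i with hT
    have hsum : ∀ p : Fin (n + 1), ∑ i : Fin n, a (Equiv.swap 0 p i.succ) = T - a p := by
      intro p
      have h0 := Equiv.sum_comp (Equiv.swap 0 p) a
      rw [Fin.sum_univ_succ, Equiv.swap_apply_left] at h0
      rw [hT, ← h0]
      ring
    rw [← Equiv.sum_comp Equiv.Perm.decomposeFin.symm, Fintype.sum_prod_type]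
    have hexp : ∀ (p : Fin (n + 1)) (e : Equiv.Perm (Fin n)),
        exp (t * ((∑ i : Fin (n + 1), if (i : ℕ) < k + 1
            then a (Equiv.Perm.decomposeFin.symm (p, e) i) else 0)
              - ((k + 1 : ℕ) : ℝ) * T / (M + (k + 1 : ℕ))))
          = exp (t * (M / n) * (a p - T / (n + 1))) *
            exp (t * ((∑ i : Fin n, if (i : ℕ) < k then a (Equiv.swap 0 p (e i).succ) else 0)
              - k * (∑ i : Fin n, a (Equiv.swap 0 p i.succ)) / (M + k))) := by
      intro p e
      rw [← exp_add, hsum, Fin.sum_univ_succ]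
      simp only [Equiv.Perm.decomposeFin_symm_apply_zero, Equiv.Perm.decomposeFin_symm_apply_succ,
        Fin.val_zero, Fin.val_succ, Nat.zero_lt_succ, if_true, Nat.add_lt_add_iff_right]
      congr 1
      push_cast
      have hMk : (M : ℝ) = n - k := by rw [hn']; ring
      rw [hMk]
      have h1 : (n : ℝ) ≠ 0 := by positivity
      have h2 : (n : ℝ) + 1 ≠ 0 := by positivity
      have h3 : (n : ℝ) - k + (k + 1) ≠ 0 := by ring_nf; positivity
      have h4 : (n : ℝ) - k + k ≠ 0 := by ring_nf; positivity
      rw [show (n : ℝ) - k + (k + 1) = n + 1 by ring, show (n : ℝ) - k + k = n by ring]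
      field_simp
      ring
    have hstep := fun p : Fin (n + 1) =>
      ih (fun i => a (Equiv.swap 0 p i.succ)) (fun i => ha _)
    have hhoef := sum_exp_centered_le hB a ha (t * (M / n))
    rw [Fintype.card_fin, Nat.cast_add_one] at hhoef
    set G : ℝ := (M : ℝ) ^ 2 * k / ((M - 1 / 2) * (M + k - 1 / 2)) with hG
    calc _ = ∑ p : Fin (n + 1), exp (t * (M / n) * (a p - T / (n + 1))) *
            ∑ e : Equiv.Perm (Fin n),
            exp (t * ((∑ i : Fin n, if (i : ℕ) < k then a (Equiv.swap 0 p (e i).succ) else 0)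
              - k * (∑ i : Fin n, a (Equiv.swap 0 p i.succ)) / (M + k))) := by
          refine Finset.sum_congr rfl fun p _ => ?_
          exact (Finset.sum_congr rfl fun e _ => hexp p e).trans (Finset.mul_sum _ _ _).symm
      _ ≤ ∑ p : Fin (n + 1), exp (t * (M / n) * (a p - T / (n + 1))) *
            (n.factorial * exp (t ^ 2 * B ^ 2 / 8 * G)) :=
          Finset.sum_le_sum fun p _ => mul_le_mul_of_nonneg_left (hstep p) (exp_pos _).le
      _ ≤ ((n + 1) * exp ((t * (M / n)) ^ 2 * B ^ 2 / 8)) *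
            (n.factorial * exp (t ^ 2 * B ^ 2 / 8 * G)) := by
          rw [← Finset.sum_mul]
          exact mul_le_mul_of_nonneg_right hhoef (by positivity)
      _ = (n + 1).factorial * exp (t ^ 2 * B ^ 2 / 8 * ((M / n) ^ 2 + G)) := by
          rw [mul_add, exp_add, Nat.factorial_succ]
          push_cast
          rw [show (t * (M / n : ℝ)) ^ 2 * B ^ 2 / 8 = t ^ 2 * B ^ 2 / 8 * (M / n : ℝ) ^ 2 by ring]
          ring
      _ ≤ _ := by
          gcongr
          have e1 : (M : ℝ) - 1 / 2 ≠ 0 := by linarith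
          have e2 : (n : ℝ) - 1 / 2 ≠ 0 := by linarith
          have e3 : (n : ℝ) + 1 / 2 ≠ 0 := by linarith
          have key : (M : ℝ) ^ 2 * ((k + 1 : ℕ) : ℝ) / ((M - 1 / 2) * (M + (k + 1 : ℕ) - 1 / 2)) - G
              = M ^ 2 / ((n : ℝ) ^ 2 - 1 / 4) := by
            have hk : (k : ℝ) = n - M := by rw [hn']; ring
            rw [hG]
            push_cast
            rw [show (M : ℝ) + (k + 1) - 1 / 2 = n + 1 / 2 by rw [hn']; ring, ← hn',
              show (n : ℝ) ^ 2 - 1 / 4 = (n - 1 / 2) * (n + 1 / 2) by ring, hk]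
            rw [div_sub_div _ _ (mul_ne_zero e1 e3) (mul_ne_zero e1 e2),
              div_eq_div_iff (by positivity) (by positivity)]
            ring
          have : ((M : ℝ) / n) ^ 2 ≤ M ^ 2 / ((n : ℝ) ^ 2 - 1 / 4) := by
            rw [div_pow]
            gcongr
            · nlinarith
            · linarith
          linarith

/-- Integrating the moment generating function against a Gaussian weight: a sub-Gaussian bound with
variance proxy `v` gives `E exp (c f ^ 2) ≤ (1 - 2 c v) ^ (-1 / 2)`. The sums are not normalised;
`N` plays the role of the total mass. -/
lemma sum_exp_sq_le {ι : Type*} [Fintype ι] (f : ι → ℝ) {N v c : ℝ} (hc : 0 ≤ c)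
    (hcv : 2 * c * v < 1) (h : ∀ t, ∑ i, exp (t * f i) ≤ N * exp (t ^ 2 * v / 2)) :
    ∑ i, exp (c * f i ^ 2) ≤ N * √(1 / (1 - 2 * c * v)) := by
  have hb : 0 < 1 - 2 * c * v := by linarith
  have hsq : √c ^ 2 = c := Real.sq_sqrt hc
  have eqn : ∀ (y x : ℝ), exp (-1 * x ^ 2) * exp (2 * √c * x * y)
      = exp (c * y ^ 2) * exp (-1 * (x - √c * y) ^ 2) := by
    intro y x
    rw [← exp_add, ← exp_add]
    congr 1
    linear_combination y ^ 2 * hsq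
  have hint : ∀ y : ℝ, Integrable (fun x : ℝ => exp (-1 * x ^ 2) * exp (2 * √c * x * y)) := by
    intro y
    simp_rw [eqn]
    exact ((integrable_exp_neg_mul_sq one_pos).comp_sub_right (√c * y)).const_mul _
  have hval : ∀ y : ℝ, ∫ x : ℝ, exp (-1 * x ^ 2) * exp (2 * √c * x * y)
      = exp (c * y ^ 2) * √π := by
    intro y
    simp_rw [eqn]
    rw [integral_const_mul, integral_sub_right_eq_self (fun x : ℝ => exp (-1 * x ^ 2)),
      integral_gaussian, div_one]
  have hle : ∫ x : ℝ, ∑ i, exp (-1 * x ^ 2) * exp (2 * √c * x * f i)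
      ≤ ∫ x : ℝ, N * exp (-(1 - 2 * c * v) * x ^ 2) := by
    refine integral_mono (integrable_finsetSum _ fun i _ => hint (f i))
      ((integrable_exp_neg_mul_sq hb).const_mul N) fun x => ?_
    dsimp only
    rw [← Finset.mul_sum]
    refine (mul_le_mul_of_nonneg_left (h (2 * √c * x)) (exp_pos _).le).trans_eq ?_
    rw [mul_left_comm, ← exp_add]
    congr 2
    linear_combination (2 * x ^ 2 * v) * hsq
  rw [integral_finsetSum _ fun i _ => hint (f i), integral_const_mul, integral_gaussian] at hle
  simp_rw [hval] at hle
  rw [← Finset.sum_mul, div_eq_mul_one_div π, Real.sqrt_mul pi_pos.le, mul_comm √π, ← mul_assoc]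
    at hle
  exact le_of_mul_le_mul_right hle (Real.sqrt_pos.2 pi_pos)

/-- The unnormalised moment generating function of `Rtest - Rtrain` for a fixed parameter. The gap
is an affine function of the sum of losses over the training part and also of that over the test
part; sampling the smaller of the two parts yields the constant `Cmu`. -/
lemma sum_exp_gap_le {S W : Type*} {m u : ℕ} (hm : 1 ≤ m) (hu : 1 ≤ u)
    (s : Fin (m + u) → S) {B : ℝ} (hB : 0 ≤ B) (ℓ : W → S → ℝ) (w : W)
    (hℓ : ∀ i, 0 ≤ ℓ w (s i) ∧ ℓ w (s i) ≤ B) (t : ℝ) :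
    ∑ σ : Equiv.Perm (Fin (m + u)), exp (t * (Rtest m u s ℓ w σ - Rtrain m u s ℓ w σ))
      ≤ (m + u).factorial *
        exp (t ^ 2 * (B ^ 2 * Cmu m u * ((m : ℝ) + u) / (4 * (m * u))) / 2) := by
  have hm' : (1 : ℝ) ≤ m := by exact_mod_cast hm
  have hu' : (1 : ℝ) ≤ u := by exact_mod_cast hu
  -- The sampling bound, with the ambient size not syntactically of the form `M + k`.
  have main : ∀ (n M k : ℕ) (_ : n = M + k) (_ : 1 ≤ M) (a : Fin n → ℝ)
      (_ : ∀ i, 0 ≤ a i ∧ a i ≤ B) (t : ℝ),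
      ∑ σ : Equiv.Perm (Fin n),
        exp (t * ((∑ i : Fin n, if (i : ℕ) < k then a (σ i) else 0) - k * (∑ i, a i) / (M + k)))
      ≤ n.factorial *
        exp (t ^ 2 * B ^ 2 / 8 * ((M : ℝ) ^ 2 * k / ((M - 1 / 2) * (M + k - 1 / 2)))) := by
    rintro n M k rfl hM a ha t
    exact sum_perm_exp_le hM hB t k a ha
  set a : Fin (m + u) → ℝ := fun i => ℓ w (s i) with ha
  have hsplit : ∀ σ : Equiv.Perm (Fin (m + u)),
      (∑ i : Fin (m + u), if (i : ℕ) < m then a (σ i) else 0)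
        + (∑ i : Fin (m + u), if m ≤ (i : ℕ) then a (σ i) else 0) = ∑ i, a i := by
    intro σ
    rw [← Finset.sum_add_distrib, ← Equiv.sum_comp σ a]
    refine Finset.sum_congr rfl fun i _ => ?_
    by_cases h : (i : ℕ) < m
    · simp [h]
    · simp [h, not_lt.1 h]
  rcases le_total m u with hle | hle
  · have h := main (m + u) u m (add_comm _ _) hu a hℓ (-t * ((m + u) / (m * u)))
    convert h using 3 with σ
    · rw [Rtest, Rtrain]
      have := hsplit σ
      simp only [ha] at this ⊢
      rw [← this]
      field_simp
      ring
    · rw [Cmu, max_eq_right (by exact_mod_cast hle)]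
      have e1 : (u : ℝ) - 1 / 2 ≠ 0 := by linarith
      have e2 : (m : ℝ) + u - 1 / 2 ≠ 0 := by linarith
      rw [show (2 * u - 1 : ℝ) = 2 * (u - 1 / 2) by ring,
        show (u + m - 1 / 2 : ℝ) = m + u - 1 / 2 by ring]
      generalize (u : ℝ) - 1 / 2 = x at *
      generalize (m : ℝ) + u - 1 / 2 = y at *
      field_simp
      ring
  · -- Composing with `Fin.rev` turns the last `u` positions into the first `u` ones.
    have h := main (m + u) m u rfl hm a hℓ (t * ((m + u) / (m * u)))
    rw [← Equiv.sum_comp (Equiv.mulRight (Fin.revPerm (n := m + u)))] at h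
    convert h using 3 with σ
    · have hrev : (∑ i : Fin (m + u), if (i : ℕ) < u
          then a ((Equiv.mulRight (Fin.revPerm (n := m + u)) σ) i) else 0)
          = ∑ i : Fin (m + u), if m ≤ (i : ℕ) then a (σ i) else 0 := by
        rw [← Equiv.sum_comp (Fin.revPerm (n := m + u))]
        refine Finset.sum_congr rfl fun i _ => ?_
        simp only [Equiv.coe_mulRight, Equiv.Perm.mul_apply, Fin.revPerm_apply, Fin.rev_rev,
          Fin.val_rev]
        refine if_congr ?_ rfl rfl
        have := i.isLt
        omega
      rw [hrev, Rtest, Rtrain]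
      have := hsplit σ
      simp only [ha] at this ⊢
      rw [← this]
      field_simp
      ring
    · rw [Cmu, max_eq_left (by exact_mod_cast hle)]
      have e1 : (m : ℝ) - 1 / 2 ≠ 0 := by linarith
      have e2 : (m : ℝ) + u - 1 / 2 ≠ 0 := by linarith
      rw [show (2 * m - 1 : ℝ) = 2 * (m - 1 / 2) by ring]
      generalize (m : ℝ) - 1 / 2 = x at *
      generalize (m : ℝ) + u - 1 / 2 = y at *
      field_simp
      ring

lemma lintegral_uniformPerm (n : ℕ) (g : Equiv.Perm (Fin n) → ℝ) (hg : ∀ σ, 0 ≤ g σ) :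
    ∫⁻ σ, ENNReal.ofReal (g σ) ∂uniformPerm n
      = ENNReal.ofReal ((∑ σ, g σ) / n.factorial) := by
  have : IsProbabilityMeasure (uniformPerm n) := by
    rw [uniformPerm]; infer_instance
  rw [← ofReal_integral_eq_lintegral_ofReal .of_finite (Filter.Eventually.of_forall hg)]
  congr 1
  rw [uniformPerm, PMF.integral_eq_sum, Finset.sum_div]
  refine Finset.sum_congr rfl fun i _ => ?_
  simp [PMF.uniformOfFintype_apply, Fintype.card_perm, div_eq_inv_mul]

theorem statement4 {Ω S 𝒲 : Type*} [MeasurableSpace Ω] [MeasurableSpace S] [MeasurableSpace 𝒲]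
    (m u : ℕ) (hmu : (2 ≤ m ∧ 3 ≤ u) ∨ (3 ≤ m ∧ 2 ≤ u))
    (s : Fin (m + u) → S) (B : ℝ) (hB : 0 < B)
    (ℓ : 𝒲 → S → ℝ) (hℓmeas : Measurable fun p : 𝒲 × S => ℓ p.1 p.2)
    (hℓ : ∀ (w : 𝒲) (i : Fin (m + u)), 0 ≤ ℓ w (s i) ∧ ℓ w (s i) ≤ B)
    (μ : Measure Ω) [IsProbabilityMeasure μ]
    (W : Ω → 𝒲) (Z : Ω → Equiv.Perm (Fin (m + u)))
    (hW : Measurable W) (hZ : Measurable Z)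
    (hZunif : Measure.map Z μ = uniformPerm (m + u))
    (hac : Measure.map (fun ω => (W ω, Z ω)) μ ≪ (Measure.map W μ).prod (Measure.map Z μ))
    (δ : ℝ) (hδ0 : 0 < δ) (hδ1 : δ < 1) :
    1 - δ ≤
      (μ {ω | |Rtest m u s ℓ (W ω) (Z ω) - Rtrain m u s ℓ (W ω) (Z ω)|
        ≤ Real.sqrt ((B ^ 2 * Cmu m u * ((m : ℝ) + u) / (2 * ((m : ℝ) * u - m - u))) *
            (Real.log ((1 / δ) * Real.sqrt ((m : ℝ) * u / ((m : ℝ) + u)))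
              + llr (Measure.map (fun ω => (W ω, Z ω)) μ)
                  ((Measure.map W μ).prod (Measure.map Z μ)) (W ω, Z ω)))}).toReal := by
  obtain ⟨hm, hu, hpos⟩ : 2 ≤ m ∧ 2 ≤ u ∧ (0 : ℝ) < (m : ℝ) * u - m - u := by
    rcases hmu with ⟨h1, h2⟩ | ⟨h1, h2⟩
    · have h1' : (2 : ℝ) ≤ m := by exact_mod_cast h1
      have h2' : (3 : ℝ) ≤ u := by exact_mod_cast h2
      exact ⟨h1, by omega, by nlinarith⟩
    · have h1' : (3 : ℝ) ≤ m := by exact_mod_cast h1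
      have h2' : (2 : ℝ) ≤ u := by exact_mod_cast h2
      exact ⟨by omega, h2, by nlinarith⟩
  have hm' : (2 : ℝ) ≤ m := by exact_mod_cast hm
  have hu' : (2 : ℝ) ≤ u := by exact_mod_cast hu
  have hC : 0 < Cmu m u := by
    have : (m : ℝ) ≤ max (m : ℝ) u := le_max_left _ _
    rw [Cmu]
    exact div_pos (by positivity) (mul_pos (by linarith) (by linarith))
  set c : ℝ := B ^ 2 * Cmu m u * ((m : ℝ) + u) / (2 * ((m : ℝ) * u - m - u)) with hc
  have hc0 : 0 < c := by positivity
  set K : ℝ := √((m : ℝ) * u / ((m : ℝ) + u)) with hK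
  have hK0 : 0 < K := by positivity
  set P := Measure.map (fun ω => (W ω, Z ω)) μ with hP
  set Q := (Measure.map W μ).prod (Measure.map Z μ) with hQ
  have : IsProbabilityMeasure (Measure.map W μ) := Measure.isProbabilityMeasure_map hW.aemeasurable
  have : IsProbabilityMeasure (Measure.map Z μ) := Measure.isProbabilityMeasure_map hZ.aemeasurable
  have : IsProbabilityMeasure P :=
    Measure.isProbabilityMeasure_map (hW.prodMk hZ).aemeasurable
  set f : 𝒲 × Equiv.Perm (Fin (m + u)) → ℝ :=
    fun p => Rtest m u s ℓ p.1 p.2 - Rtrain m u s ℓ p.1 p.2 with hf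
  have hfm : Measurable f := by
    refine measurable_from_prod_countable_left fun σ => ?_
    have hl : ∀ i, Measurable fun w => ℓ w (s i) := fun i =>
      hℓmeas.comp (measurable_id.prodMk measurable_const)
    simp only [hf, Rtest, Rtrain]
    refine ((Finset.measurable_sum _ fun i _ => ?_).div_const _).sub
      ((Finset.measurable_sum _ fun i _ => ?_).div_const _)
    · split_ifs
      exacts [hl _, measurable_const]
    · split_ifs
      exacts [hl _, measurable_const]
  -- The exponential moment of the squared gap under a fixed parameter.
  have hmom : ∀ w, ∑ σ : Equiv.Perm (Fin (m + u)), exp (c⁻¹ * f (w, σ) ^ 2)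
      ≤ (m + u).factorial * K := by
    intro w
    have hcv : 2 * c⁻¹ * (B ^ 2 * Cmu m u * ((m : ℝ) + u) / (4 * (m * u)))
        = 1 - ((m : ℝ) + u) / (m * u) := by
      rw [hc]
      field_simp
      ring
    have h := sum_exp_sq_le (fun σ : Equiv.Perm (Fin (m + u)) => f (w, σ)) (inv_pos.2 hc0).le
      (by rw [hcv]; have : 0 < ((m : ℝ) + u) / (m * u) := by positivity
          linarith)
      (fun t => sum_exp_gap_le (by omega) (by omega) s hB.le ℓ w (hℓ w) t)
    rwa [hcv, sub_sub_cancel, one_div_div] at h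
  have hQint : ∫⁻ p, ENNReal.ofReal (δ / K * exp (c⁻¹ * f p ^ 2)) ∂Q ≤ ENNReal.ofReal δ := by
    have hmeas : Measurable fun p => ENNReal.ofReal (δ / K * exp (c⁻¹ * f p ^ 2)) := by
      fun_prop
    rw [hQ, lintegral_prod _ hmeas.aemeasurable, hZunif]
    calc _ ≤ ∫⁻ _, ENNReal.ofReal δ ∂(Measure.map W μ) := by
          refine lintegral_mono fun w => ?_
          rw [lintegral_uniformPerm _ _ fun σ => by positivity]
          refine ENNReal.ofReal_le_ofReal ?_
          rw [← Finset.mul_sum, div_le_iff₀ (by positivity)]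
          refine (mul_le_mul_of_nonneg_left (hmom w) (by positivity)).trans_eq ?_
          field_simp
      _ = _ := by simp
  set G : Set (𝒲 × Equiv.Perm (Fin (m + u))) :=
    {p | |f p| ≤ √(c * (log (1 / δ * K) + llr P Q p))} with hG
  have hGm : MeasurableSet G := by
    have := measurable_llr P Q
    exact measurableSet_le (by fun_prop) (by fun_prop)
  -- On the bad set the density is pointwise dominated by the exponential of the squared gap.
  have hbad : P Gᶜ ≤ ENNReal.ofReal δ := by
    rw [← Measure.setLIntegral_rnDeriv hac]
    refine le_trans ?_ ((setLIntegral_le_lintegral Gᶜ _).trans hQint)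
    refine setLIntegral_mono_ae' hGm.compl ?_
    filter_upwards [Measure.rnDeriv_lt_top P Q] with p hp hpG
    rw [hG, Set.mem_compl_iff, Set.mem_ofPred_eq, not_le] at hpG
    rw [← ENNReal.ofReal_toReal hp.ne]
    refine ENNReal.ofReal_le_ofReal ?_
    rcases (ENNReal.toReal_nonneg (a := P.rnDeriv Q p)).eq_or_lt with h0 | h0
    · rw [← h0]; positivity
    have h1 : c * (log (1 / δ * K) + llr P Q p) < f p ^ 2 := by
      rw [← sq_abs]; exact Real.lt_sq_of_sqrt_lt hpG
    have h2 : log (1 / δ * K) + llr P Q p ≤ c⁻¹ * f p ^ 2 := by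
      rw [inv_mul_eq_div, le_div_iff₀ hc0]; linarith
    have h3 := exp_le_exp.2 h2
    rw [exp_add, exp_log (by positivity), llr, exp_log h0] at h3
    calc _ = δ / K * (1 / δ * K * (P.rnDeriv Q p).toReal) := by field_simp
      _ ≤ _ := by gcongr
  have hPG : μ {ω | |Rtest m u s ℓ (W ω) (Z ω) - Rtrain m u s ℓ (W ω) (Z ω)|
      ≤ √(c * (log (1 / δ * K) + llr P Q (W ω, Z ω)))} = P G := by
    rw [hP, Measure.map_apply (hW.prodMk hZ) hGm]
    rfl
  rw [hPG]
  have hcompl := prob_compl_eq_one_sub (μ := P) hGm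
  have h1 : (P Gᶜ).toReal ≤ δ := ENNReal.toReal_le_of_le_ofReal hδ0.le hbad
  rw [hcompl, ENNReal.toReal_sub_of_le prob_le_one ENNReal.one_ne_top, ENNReal.toReal_one] at h1
  linarith

end
end

section
/- Case u = m, n = 2m. Let W be a 𝒲-valued random variable jointly distributed with (Z̃,U), and suppose 0 ≤ ℓ(w, s i) ≤ B for all w ∈ 𝒲 and all i. Then E_{W,Z̃,U}[ ( R_test(W,Z̃,U) − R_train(W,Z̃,U) )² ] ≤ (4·B²/m) · ( I(W;U|Z̃) + log 3 ). -/
/-!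
Fix a supersample `z̃`. The test–train gap equals `(1/m) Σ ε_i D_i`, where the signs `ε_i` are
determined by `U` and `D_i` is the loss difference within the `i`-th pair, so `|D_i| ≤ B`. If `W`
and `U` are decoupled, the `ε_i` are independent Rademacher signs given `W`, and the Gaussian
linearization `exp (x² / 4) = π^(-1/2) ∫ exp (-t² + t x) dt` together with `cosh x ≤ exp (x² / 2)`
gives `E exp (m / (4 B²) · gap²) ≤ √2 ≤ 3` (`sum_exp_sq_le`). The Donsker–Varadhan inequality
(`donsker_varadhan`) transfers this to the joint law of `(W, U)` at the cost of the mutual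
information (`fixed_supersample_bound`), and averaging over `z̃` gives the theorem; independence of
`Z̃` and `U` keeps `U` uniform after conditioning.

The KL divergence is a Bochner integral, so the log-likelihood ratio has to be integrable for it
to carry information. This holds because `U` is uniform on `2^m` points, so the joint law is at
most `2^m` times the product of its marginals (`joint_le_smul_prod`).
-/

open MeasureTheory ProbabilityTheory Real
open scoped ENNReal

noncomputable section

/-- The map sending `(i, b)` to the `b`-th component of the `i`-th pair of a
candidate supersample. -/
def pairMap (m : ℕ) (zt : Fin m → Fin (2 * m) × Fin (2 * m)) :
    Fin m × Bool → Fin (2 * m) :=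
  fun p => if p.2 then (zt p.1).2 else (zt p.1).1

/-- A transductive supersample: a sequence of `m` pairwise disjoint ascending
pairs covering `Fin (2m)`. -/
def IsSupersample (m : ℕ) (zt : Fin m → Fin (2 * m) × Fin (2 * m)) : Prop :=
  (∀ i, (zt i).1 < (zt i).2) ∧ Function.Bijective (pairMap m zt)

instance (m : ℕ) : DecidablePred (IsSupersample m) := fun zt =>
  inferInstanceAs
    (Decidable ((∀ i, (zt i).1 < (zt i).2) ∧ Function.Bijective (pairMap m zt)))

/-- Transductive training error for a supersample `zt` and selector `u`:
`R_train(w, z̃, u) = (1/m)·Σ_i ℓ(w, s(z̃_{i, u_i}))` (`u i = false` selects the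
first component, `u i = true` the second). -/
def RtrainSS {S W : Type*} (m : ℕ) (s : Fin (2 * m) → S) (ℓ : W → S → ℝ) (w : W)
    (zt : Fin m → Fin (2 * m) × Fin (2 * m)) (u : Fin m → Bool) : ℝ :=
  (∑ i : Fin m, ℓ w (s (if u i then (zt i).2 else (zt i).1))) / m

/-- Transductive test error for a supersample `zt` and selector `u`:
`R_test(w, z̃, u) = (1/m)·Σ_i ℓ(w, s(z̃_{i, 1−u_i}))`. -/
def RtestSS {S W : Type*} (m : ℕ) (s : Fin (2 * m) → S) (ℓ : W → S → ℝ) (w : W)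
    (zt : Fin m → Fin (2 * m) × Fin (2 * m)) (u : Fin m → Bool) : ℝ :=
  (∑ i : Fin m, ℓ w (s (if u i then (zt i).1 else (zt i).2))) / m

/-- Disintegrated mutual information given the event `A`: the KL divergence
between the conditional joint law of `(X, Y)` given `A` and the product of the
corresponding conditional marginal laws. -/
def condMI {Ω α β : Type*} [MeasurableSpace Ω] [MeasurableSpace α] [MeasurableSpace β]
    (μ : Measure Ω) (X : Ω → α) (Y : Ω → β) (A : Set Ω) : ℝ :=
  klDivR (Measure.map (fun ω => (X ω, Y ω)) (μ[|A]))
    ((Measure.map X (μ[|A])).prod (Measure.map Y (μ[|A])))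

/-! ### KL divergence -/

/-- Donsker–Varadhan inequality. -/
lemma donsker_varadhan {α : Type*} [MeasurableSpace α] (P Q : Measure α)
    [IsProbabilityMeasure P] [IsProbabilityMeasure Q] (hPQ : P ≪ Q) (f : α → ℝ)
    (hint : Integrable (llr P Q) P) (hf : Integrable f P)
    (hexp : Integrable (fun x => exp (f x)) Q) :
    ∫ x, f x ∂P ≤ klDivR P Q + log (∫ x, exp (f x) ∂Q) := by
  have htilt : IsProbabilityMeasure (Q.tilted f) := isProbabilityMeasure_tilted hexp
  have hac : P ≪ Q.tilted f := hPQ.trans (absolutelyContinuous_tilted hexp)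
  have hnonneg : 0 ≤ ∫ x, llr P (Q.tilted f) x ∂P := by
    rw [← InformationTheory.toReal_klDiv_of_measure_eq hac (by simp)]
    exact ENNReal.toReal_nonneg
  rw [integral_llr_tilted_right hPQ hf hexp hint] at hnonneg
  unfold klDivR
  linarith

/-- The density `dP/dQ` lies in `[0, 1]`, where `x log x` is bounded. -/
lemma integrable_llr_of_le {α : Type*} [MeasurableSpace α] (P Q : Measure α)
    [IsFiniteMeasure P] [IsFiniteMeasure Q] (hPQ : P ≤ Q) : Integrable (llr P Q) P := by
  rw [← integrable_rnDeriv_mul_log_iff hPQ.absolutelyContinuous]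
  refine Integrable.of_bound (C := 1) ?_ ?_
  · exact (((P.measurable_rnDeriv Q).ennreal_toReal).mul
      ((P.measurable_rnDeriv Q).ennreal_toReal.log)).aestronglyMeasurable
  · filter_upwards [Measure.rnDeriv_le_one_of_le hPQ] with x hx
    have h1 : (P.rnDeriv Q x).toReal ≤ 1 := by
      simpa using ENNReal.toReal_mono ENNReal.one_ne_top hx
    have h0 : 0 ≤ (P.rnDeriv Q x).toReal := ENNReal.toReal_nonneg
    rcases h0.eq_or_lt with h | h
    · simp [← h]
    · rw [mul_comm]
      exact (abs_log_mul_self_lt _ h h1).le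

lemma integrable_llr_of_le_smul {α : Type*} [MeasurableSpace α] (P Q : Measure α)
    [IsFiniteMeasure P] [IsFiniteMeasure Q] (c : NNReal) (hc : c ≠ 0) (hPQ : P ≤ c • Q) :
    Integrable (llr P Q) P := by
  have hac : P ≪ Q :=
    hPQ.absolutelyContinuous.trans (Measure.smul_absolutelyContinuous (c := c))
  have h := (integrable_llr_of_le P (c • Q) hPQ).add (integrable_const (log c))
  refine h.congr ?_
  filter_upwards [llr_smul_nnreal_right hac c hc] with x hx
  simp [hx]

/-- When `Y` is uniform on a finite type with `c` elements, the joint law of `(X, Y)` has density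
at most `c` with respect to the product of the marginals. -/
lemma joint_le_smul_prod {Ω α β : Type*} [MeasurableSpace Ω] [MeasurableSpace α]
    [MeasurableSpace β] [Fintype β] [MeasurableSingletonClass β]
    (P : Measure Ω) [IsProbabilityMeasure P] (X : Ω → α) (Y : Ω → β)
    (hX : Measurable X) (hY : Measurable Y) (c : NNReal) (hc : c ≠ 0)
    (hunif : ∀ v, P (Y ⁻¹' {v}) = (c : ℝ≥0∞)⁻¹) :
    P.map (fun ω => (X ω, Y ω)) ≤ c • ((P.map X).prod (P.map Y)) := by
  have : IsProbabilityMeasure (P.map X) := Measure.isProbabilityMeasure_map hX.aemeasurable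
  have : IsProbabilityMeasure (P.map Y) := Measure.isProbabilityMeasure_map hY.aemeasurable
  refine Measure.le_iff.2 fun A hA => ?_
  have hsec : ∀ y : β, MeasurableSet ((fun x => (x, y)) ⁻¹' A : Set α) := fun y =>
    measurable_prodMk_right hA
  rw [Measure.map_apply (hX.prodMk hY) hA, Measure.smul_apply, Measure.prod_apply_symm hA,
    lintegral_fintype]
  have hsub : (fun ω => (X ω, Y ω)) ⁻¹' A ⊆ ⋃ y : β, X ⁻¹' ((fun x => (x, y)) ⁻¹' A) := by
    intro ω hω
    exact Set.mem_iUnion.2 ⟨Y ω, hω⟩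
  have hc' : (c : ℝ≥0∞) ≠ 0 := by simpa using hc
  refine (measure_mono hsub).trans ((measure_iUnion_fintype_le P _).trans (le_of_eq ?_))
  rw [ENNReal.smul_def, smul_eq_mul, Finset.mul_sum]
  refine Finset.sum_congr rfl fun y _ => ?_
  rw [Measure.map_apply hX (hsec y), Measure.map_apply hY (measurableSet_singleton y), hunif,
    mul_left_comm, ENNReal.mul_inv_cancel hc' ENNReal.coe_ne_top, mul_one]

/-! ### Rademacher sums -/

/-- The Rademacher sign attached to a selector bit. -/
def selSign (b : Bool) : ℝ := if b then -1 else 1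

/-- Completing the square: the Gaussian linearization of `exp (x ^ 2 / 4)`. -/
lemma integral_exp_linearize (x : ℝ) :
    Integrable (fun t : ℝ => exp (-t ^ 2 + t * x)) ∧
      ∫ t : ℝ, exp (-t ^ 2 + t * x) = √π * exp (x ^ 2 / 4) := by
  have h : (fun t : ℝ => exp (-t ^ 2 + t * x)) =
      fun t => exp (-1 * (t - x / 2) ^ 2) * exp (x ^ 2 / 4) := by
    funext t
    rw [← exp_add]
    congr 1
    ring
  rw [h]
  refine ⟨((integrable_exp_neg_mul_sq one_pos).comp_sub_right (x / 2)).mul_const _, ?_⟩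
  rw [integral_mul_const, integral_sub_right_eq_self (fun t : ℝ => exp (-1 * t ^ 2)) (x / 2),
    integral_gaussian]
  simp

/-- Sub-Gaussian bound on a Rademacher sum: its moment generating function is a product of
hyperbolic cosines, and `cosh x ≤ exp (x² / 2)`. -/
lemma sum_exp_selSign (m : ℕ) (a : Fin m → ℝ) :
    ∑ u : Fin m → Bool, exp (∑ i, selSign (u i) * a i) ≤ 2 ^ m * exp ((∑ i, a i ^ 2) / 2) := by
  have h1 : ∑ u : Fin m → Bool, exp (∑ i, selSign (u i) * a i) = ∏ i, (2 * cosh (a i)) := by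
    simp_rw [exp_sum]
    rw [← Fintype.prod_sum (fun i (b : Bool) => exp (selSign b * a i))]
    refine Finset.prod_congr rfl fun i _ => ?_
    simp [selSign, cosh_eq]
    ring
  rw [h1, Finset.prod_mul_distrib, Finset.sum_div, exp_sum]
  simp only [Finset.prod_const, Finset.card_univ, Fintype.card_fin]
  gcongr with i
  exact cosh_le_exp_half_sq _

/-- Square-exponential moment of a Rademacher sum. The Gaussian integral gives the value `√2`,
which is relaxed to `3`. -/
lemma sum_exp_sq_le_s7 (m : ℕ) (hm : 1 ≤ m) (a : Fin m → ℝ) (ha : ∀ i, |a i| ≤ 1) :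
    ∑ u : Fin m → Bool, exp ((∑ i, selSign (u i) * a i) ^ 2 / (4 * m)) ≤ 2 ^ m * 3 := by
  have hm0 : (0 : ℝ) < m := by exact_mod_cast hm
  have hs : √(m : ℝ) ^ 2 = m := sq_sqrt hm0.le
  have hs0 : 0 < √(m : ℝ) := sqrt_pos.2 hm0
  have hpi : 0 < √π := sqrt_pos.2 pi_pos
  set S : (Fin m → Bool) → ℝ := fun u => (∑ i, selSign (u i) * a i) / √m with hS
  have key : √π * ∑ u : Fin m → Bool, exp ((∑ i, selSign (u i) * a i) ^ 2 / (4 * m)) =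
      ∫ t : ℝ, ∑ u : Fin m → Bool, exp (-t ^ 2 + t * S u) := by
    rw [integral_finsetSum _ fun u _ => (integral_exp_linearize (S u)).1, Finset.mul_sum]
    refine Finset.sum_congr rfl fun u _ => ?_
    rw [(integral_exp_linearize (S u)).2, hS]
    simp only [div_pow, hs]
    congr 2
    field_simp
  have hpt : ∀ t : ℝ, ∑ u : Fin m → Bool, exp (-t ^ 2 + t * S u) ≤
      2 ^ m * exp (-(1 / 2) * t ^ 2) := by
    intro t
    have h := sum_exp_selSign m (fun i => t / √m * a i)
    have hsum : ∑ i, (t / √m * a i) ^ 2 ≤ t ^ 2 := by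
      calc ∑ i, (t / √m * a i) ^ 2 ≤ ∑ _i : Fin m, t ^ 2 / m := by
            refine Finset.sum_le_sum fun i _ => ?_
            have : a i ^ 2 ≤ 1 := (sq_le_one_iff_abs_le_one _).2 (ha i)
            rw [mul_pow, div_pow, hs]
            exact mul_le_of_le_one_right (by positivity) this
        _ = t ^ 2 := by simp; field_simp
    have hrw : ∀ u : Fin m → Bool, exp (-t ^ 2 + t * S u) =
        exp (-t ^ 2) * exp (∑ i, selSign (u i) * (t / √m * a i)) := by
      intro u
      rw [← exp_add]
      congr 2
      simp only [hS, Finset.sum_div, Finset.mul_sum]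
      refine Finset.sum_congr rfl fun i _ => ?_
      ring
    simp_rw [hrw]
    rw [← Finset.mul_sum]
    calc exp (-t ^ 2) * ∑ u : Fin m → Bool, exp (∑ i, selSign (u i) * (t / √m * a i))
        ≤ exp (-t ^ 2) * (2 ^ m * exp (t ^ 2 / 2)) := by
          gcongr
          exact h.trans (by gcongr)
      _ = 2 ^ m * exp (-(1 / 2) * t ^ 2) := by
          rw [mul_left_comm, ← exp_add]
          congr 2
          ring
  have hle : √π * ∑ u : Fin m → Bool, exp ((∑ i, selSign (u i) * a i) ^ 2 / (4 * m)) ≤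
      2 ^ m * √(π / (1 / 2)) := by
    rw [key, ← integral_gaussian, ← integral_const_mul]
    exact integral_mono (integrable_finsetSum _ fun u _ => (integral_exp_linearize (S u)).1)
      ((integrable_exp_neg_mul_sq (by norm_num)).const_mul _) hpt
  have h3 : √(π / (1 / 2)) ≤ √π * 3 := by
    rw [show √π * 3 = √(π * 9) by
      rw [sqrt_mul pi_pos.le, show (9 : ℝ) = 3 ^ 2 by norm_num, sqrt_sq (by norm_num)]]
    exact sqrt_le_sqrt (by nlinarith [pi_pos])
  refine le_of_mul_le_mul_left (hle.trans ?_) hpi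
  calc (2 : ℝ) ^ m * √(π / (1 / 2)) ≤ 2 ^ m * (√π * 3) := by gcongr
    _ = √π * (2 ^ m * 3) := by ring

/-! ### The generalization gap -/

/-- The generalization gap is a Rademacher-signed mean of the within-pair loss differences. -/
lemma gap_eq {S 𝒲 : Type*} (m : ℕ) (s : Fin (2 * m) → S) (ℓ : 𝒲 → S → ℝ) (w : 𝒲)
    (zt : Fin m → Fin (2 * m) × Fin (2 * m)) (u : Fin m → Bool) :
    RtestSS m s ℓ w zt u - RtrainSS m s ℓ w zt u =
      (∑ i, selSign (u i) * (ℓ w (s (zt i).2) - ℓ w (s (zt i).1))) / m := by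
  unfold RtestSS RtrainSS
  rw [← sub_div, ← Finset.sum_sub_distrib]
  congr 1
  refine Finset.sum_congr rfl fun i _ => ?_
  cases h : u i <;> simp [selSign]

lemma gap_sq_le {S 𝒲 : Type*} (m : ℕ) (hm : 1 ≤ m) (s : Fin (2 * m) → S) (B : ℝ)
    (ℓ : 𝒲 → S → ℝ) (hℓ : ∀ (w : 𝒲) (i : Fin (2 * m)), 0 ≤ ℓ w (s i) ∧ ℓ w (s i) ≤ B)
    (w : 𝒲) (zt : Fin m → Fin (2 * m) × Fin (2 * m)) (u : Fin m → Bool) :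
    (RtestSS m s ℓ w zt u - RtrainSS m s ℓ w zt u) ^ 2 ≤ B ^ 2 := by
  have hm0 : (0 : ℝ) < m := by exact_mod_cast hm
  have hbd : ∀ f : Fin m → Fin (2 * m), 0 ≤ (∑ i, ℓ w (s (f i))) / m ∧
      (∑ i, ℓ w (s (f i))) / m ≤ B := by
    intro f
    refine ⟨div_nonneg (Finset.sum_nonneg fun i _ => (hℓ w _).1) hm0.le, ?_⟩
    rw [div_le_iff₀ hm0]
    calc ∑ i, ℓ w (s (f i)) ≤ ∑ _i : Fin m, B := Finset.sum_le_sum fun i _ => (hℓ w _).2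
      _ = B * m := by simp [mul_comm]
  have h1 := hbd (fun i => if u i then (zt i).1 else (zt i).2)
  have h2 := hbd (fun i => if u i then (zt i).2 else (zt i).1)
  unfold RtestSS RtrainSS
  exact sq_le_sq' (by linarith) (by linarith)

lemma measurable_gap_sq_fixed {S 𝒲 : Type*} [MeasurableSpace S] [MeasurableSpace 𝒲] (m : ℕ)
    (s : Fin (2 * m) → S) (ℓ : 𝒲 → S → ℝ) (hℓmeas : Measurable fun p : 𝒲 × S => ℓ p.1 p.2)
    (zt : Fin m → Fin (2 * m) × Fin (2 * m)) (u : Fin m → Bool) :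
    Measurable fun w => (RtestSS m s ℓ w zt u - RtrainSS m s ℓ w zt u) ^ 2 := by
  unfold RtestSS RtrainSS
  have h : ∀ x : S, Measurable fun w => ℓ w x := fun x =>
    hℓmeas.comp (measurable_id.prodMk measurable_const)
  exact (((Finset.measurable_sum _ fun i _ => h _).div_const _).sub
    ((Finset.measurable_sum _ fun i _ => h _).div_const _)).pow_const 2

lemma measurable_of_countable_right {Ω α β : Type*} [MeasurableSpace Ω] [MeasurableSpace α]
    [MeasurableSpace β] [Countable β] [MeasurableSingletonClass β]
    {G : α → β → ℝ} (hG : ∀ b, Measurable fun a => G a b) {X : Ω → α} {Y : Ω → β}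
    (hX : Measurable X) (hY : Measurable Y) : Measurable fun ω => G (X ω) (Y ω) :=
  (measurable_from_prod_countable_left (f := fun p : α × β => G p.1 p.2) hG).comp (hX.prodMk hY)

lemma measurable_gap_sq {Ω S 𝒲 : Type*} [MeasurableSpace Ω] [MeasurableSpace S] [MeasurableSpace 𝒲] (m : ℕ)
    (s : Fin (2 * m) → S) (ℓ : 𝒲 → S → ℝ) (hℓmeas : Measurable fun p : 𝒲 × S => ℓ p.1 p.2)
    (W : Ω → 𝒲) (Zt : Ω → (Fin m → Fin (2 * m) × Fin (2 * m))) (U : Ω → (Fin m → Bool))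
    (hWm : Measurable W) (hZtm : Measurable Zt) (hUm : Measurable U) :
    Measurable fun ω =>
      (RtestSS m s ℓ (W ω) (Zt ω) (U ω) - RtrainSS m s ℓ (W ω) (Zt ω) (U ω)) ^ 2 := by
  have h := measurable_of_countable_right
    (G := fun w (q : (Fin m → Fin (2 * m) × Fin (2 * m)) × (Fin m → Bool)) =>
      (RtestSS m s ℓ w q.1 q.2 - RtrainSS m s ℓ w q.1 q.2) ^ 2)
    (fun q => measurable_gap_sq_fixed m s ℓ hℓmeas q.1 q.2)
    (X := W) (Y := fun ω => (Zt ω, U ω)) hWm (hZtm.prodMk hUm)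
  exact h

/-- The bound for a fixed supersample, under any law making `U` uniform: Donsker–Varadhan applied
to `m / (4 B²)` times the squared gap. -/
lemma fixed_supersample_bound {Ω S 𝒲 : Type*} [MeasurableSpace Ω] [MeasurableSpace S]
    [MeasurableSpace 𝒲] (m : ℕ) (hm : 1 ≤ m)
    (s : Fin (2 * m) → S) (B : ℝ) (hB : 0 < B)
    (ℓ : 𝒲 → S → ℝ) (hℓmeas : Measurable fun p : 𝒲 × S => ℓ p.1 p.2)
    (hℓ : ∀ (w : 𝒲) (i : Fin (2 * m)), 0 ≤ ℓ w (s i) ∧ ℓ w (s i) ≤ B)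
    (P : Measure Ω) [IsProbabilityMeasure P]
    (W : Ω → 𝒲) (U : Ω → (Fin m → Bool)) (hWm : Measurable W) (hUm : Measurable U)
    (hU : ∀ v : Fin m → Bool, P (U ⁻¹' {v}) = ((2 ^ m : ℕ) : ℝ≥0∞)⁻¹)
    (zt : Fin m → Fin (2 * m) × Fin (2 * m)) :
    ∫ ω, (RtestSS m s ℓ (W ω) zt (U ω) - RtrainSS m s ℓ (W ω) zt (U ω)) ^ 2 ∂P
      ≤ (4 * B ^ 2 / m) *
          (klDivR (P.map (fun ω => (W ω, U ω))) ((P.map W).prod (P.map U)) + Real.log 3) := by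
  have hm0 : (0 : ℝ) < m := by exact_mod_cast hm
  have : IsProbabilityMeasure (P.map W) := Measure.isProbabilityMeasure_map hWm.aemeasurable
  have : IsProbabilityMeasure (P.map U) := Measure.isProbabilityMeasure_map hUm.aemeasurable
  have : IsProbabilityMeasure (P.map (fun ω => (W ω, U ω))) :=
    Measure.isProbabilityMeasure_map (hWm.prodMk hUm).aemeasurable
  set F : 𝒲 × (Fin m → Bool) → ℝ := fun p =>
    (RtestSS m s ℓ p.1 zt p.2 - RtrainSS m s ℓ p.1 zt p.2) ^ 2 with hF
  have hFm : Measurable F := measurable_gap_sq m s ℓ hℓmeas Prod.fst (fun _ => zt) Prod.snd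
    measurable_fst measurable_const measurable_snd
  set lam : ℝ := m / (4 * B ^ 2) with hlam
  have hlam0 : 0 < lam := by positivity
  have hFB : ∀ p, F p ≤ B ^ 2 := fun p => gap_sq_le m hm s B ℓ hℓ p.1 zt p.2
  have hle := joint_le_smul_prod P W U hWm hUm ((2 ^ m : ℕ) : NNReal) (by simp)
    (by simpa using hU)
  have hac : P.map (fun ω => (W ω, U ω)) ≪ (P.map W).prod (P.map U) :=
    hle.absolutelyContinuous.trans (Measure.smul_absolutelyContinuous
      (c := ((2 ^ m : ℕ) : NNReal)))
  have hllr := integrable_llr_of_le_smul _ _ _ (by simp) hle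
  have hfint : Integrable (fun p => lam * F p) (P.map (fun ω => (W ω, U ω))) := by
    refine Integrable.const_mul (Integrable.of_bound hFm.aestronglyMeasurable (B ^ 2)
      (Filter.Eventually.of_forall fun p => ?_)) _
    rw [norm_of_nonneg (sq_nonneg _)]
    exact hFB p
  have hexpint : Integrable (fun p => exp (lam * F p)) ((P.map W).prod (P.map U)) := by
    refine Integrable.of_bound (hFm.const_mul lam).exp.aestronglyMeasurable (exp (lam * B ^ 2))
      (Filter.Eventually.of_forall fun p => ?_)
    rw [norm_of_nonneg (exp_pos _).le]
    have := hFB p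
    gcongr
  have hexp3 : ∫ p, exp (lam * F p) ∂((P.map W).prod (P.map U)) ≤ 3 := by
    rw [integral_prod _ hexpint]
    have hin : ∀ w, ∫ u, exp (lam * F (w, u)) ∂(P.map U) ≤ 3 := by
      intro w
      rw [integral_fintype Integrable.of_finite]
      have hreal : ∀ v, (P.map U).real {v} = ((2 : ℝ) ^ m)⁻¹ := by
        intro v
        rw [measureReal_def, Measure.map_apply hUm (measurableSet_singleton v), hU]
        simp
      simp_rw [hreal, smul_eq_mul]
      rw [← Finset.mul_sum, inv_mul_le_iff₀ (by positivity)]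
      have ha : ∀ i, |(ℓ w (s (zt i).2) - ℓ w (s (zt i).1)) / B| ≤ 1 := by
        intro i
        have h1 := hℓ w (zt i).1
        have h2 := hℓ w (zt i).2
        rw [abs_div, abs_of_pos hB, div_le_one hB, abs_le]
        constructor <;> linarith
      refine (Finset.sum_congr rfl fun u _ => ?_).trans_le (sum_exp_sq_le_s7 m hm _ ha)
      simp only [hF, gap_eq, hlam, ← mul_div_assoc, ← Finset.sum_div]
      congr 1
      field_simp
    calc ∫ w, ∫ u, exp (lam * F (w, u)) ∂(P.map U) ∂(P.map W)
        ≤ ∫ _w, (3 : ℝ) ∂(P.map W) :=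
          integral_mono hexpint.integral_prod_left (integrable_const _) hin
      _ = 3 := by simp
  have hDV := donsker_varadhan _ _ hac (fun p => lam * F p) hllr hfint hexpint
  have hpos : 0 < ∫ p, exp (lam * F p) ∂((P.map W).prod (P.map U)) := integral_exp_pos hexpint
  have hlog := log_le_log hpos hexp3
  rw [integral_const_mul, integral_map (hWm.prodMk hUm).aemeasurable
    hFm.aestronglyMeasurable] at hDV
  have hfin := hDV.trans (add_le_add_right hlog _)
  rw [show 4 * B ^ 2 / (m : ℝ) = lam⁻¹ by rw [hlam, inv_div]]
  exact (le_inv_mul_iff₀ hlam0).2 hfin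

theorem statement7 {Ω S 𝒲 : Type*} [MeasurableSpace Ω] [MeasurableSpace S] [MeasurableSpace 𝒲]
    (m : ℕ) (hm : 1 ≤ m)
    (s : Fin (2 * m) → S) (B : ℝ) (hB : 0 < B)
    (ℓ : 𝒲 → S → ℝ) (hℓmeas : Measurable fun p : 𝒲 × S => ℓ p.1 p.2)
    (hℓ : ∀ (w : 𝒲) (i : Fin (2 * m)), 0 ≤ ℓ w (s i) ∧ ℓ w (s i) ≤ B)
    (μ : Measure Ω) [IsProbabilityMeasure μ]
    (W : Ω → 𝒲) (Zt : Ω → (Fin m → Fin (2 * m) × Fin (2 * m))) (U : Ω → (Fin m → Bool))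
    (hWm : Measurable W) (hZtm : Measurable Zt) (hUm : Measurable U)
    -- Z̃ is uniformly distributed on the set of transductive supersamples
    (hZt : ∀ zt, μ (Zt ⁻¹' {zt}) =
      if IsSupersample m zt
        then ((Finset.univ.filter (IsSupersample m)).card : ℝ≥0∞)⁻¹ else 0)
    -- U is uniformly distributed on {0,1}^m
    (hU : ∀ v : Fin m → Bool, μ (U ⁻¹' {v}) = ((2 ^ m : ℕ) : ℝ≥0∞)⁻¹)
    -- Z̃ and U are independent
    (hIndep : IndepFun Zt U μ) :
    ∫ ω, (RtestSS m s ℓ (W ω) (Zt ω) (U ω) - RtrainSS m s ℓ (W ω) (Zt ω) (U ω)) ^ 2 ∂μ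
      ≤ (4 * B ^ 2 / m) *
          ((∫ ω, condMI μ W U (Zt ⁻¹' {Zt ω}) ∂μ) + Real.log 3) := by
  classical
  set f : Ω → ℝ := fun ω =>
    (RtestSS m s ℓ (W ω) (Zt ω) (U ω) - RtrainSS m s ℓ (W ω) (Zt ω) (U ω)) ^ 2 with hf
  have hfm : Measurable f := measurable_gap_sq m s ℓ hℓmeas W Zt U hWm hZtm hUm
  have hfint : Integrable f μ := by
    refine Integrable.of_bound hfm.aestronglyMeasurable (B ^ 2)
      (Filter.Eventually.of_forall fun ω => ?_)
    rw [norm_of_nonneg (sq_nonneg _)]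
    exact gap_sq_le m hm s B ℓ hℓ _ _ _
  have hfib : ∀ z, MeasurableSet (Zt ⁻¹' {z}) := fun z => hZtm (measurableSet_singleton z)
  have hsplit : ∀ g : Ω → ℝ, Integrable g μ →
      ∫ ω, g ω ∂μ = ∑ z, ∫ ω in Zt ⁻¹' {z}, g ω ∂μ := by
    intro g hg
    rw [← integral_iUnion_fintype hfib _ fun z => hg.integrableOn]
    · rw [← Set.preimage_iUnion, Set.iUnion_of_singleton, Set.preimage_univ,
        Measure.restrict_univ]
    · intro z z' hzz'
      exact (Set.disjoint_singleton.2 hzz').preimage Zt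
  set M : (Fin m → Fin (2 * m) × Fin (2 * m)) → ℝ :=
    fun z => condMI μ W U (Zt ⁻¹' {z}) with hM
  have hMint : Integrable (fun ω => M (Zt ω)) μ :=
    (Integrable.of_finite (μ := μ.map Zt) (f := M)).comp_measurable hZtm
  have hRint : Integrable (fun ω => (4 * B ^ 2 / m) * (M (Zt ω) + log 3)) μ :=
    (hMint.add (integrable_const _)).const_mul _
  have hR : (4 * B ^ 2 / m) * ((∫ ω, M (Zt ω) ∂μ) + log 3) =
      ∫ ω, (4 * B ^ 2 / m) * (M (Zt ω) + log 3) ∂μ := by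
    rw [integral_const_mul, integral_add hMint (integrable_const _)]
    simp
  change ∫ ω, f ω ∂μ ≤ (4 * B ^ 2 / m) * ((∫ ω, M (Zt ω) ∂μ) + log 3)
  rw [hR, hsplit f hfint, hsplit _ hRint]
  refine Finset.sum_le_sum fun z _ => ?_
  have hR' : ∫ ω in Zt ⁻¹' {z}, (4 * B ^ 2 / m) * (M (Zt ω) + log 3) ∂μ =
      μ.real (Zt ⁻¹' {z}) * ((4 * B ^ 2 / m) * (M z + log 3)) := by
    rw [setIntegral_congr_fun (g := fun _ => (4 * B ^ 2 / m) * (M z + log 3)) (hfib z)]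
    · simp
    · intro ω hω
      have : Zt ω = z := hω
      simp only [this]
  rw [hR']
  rcases eq_or_ne (μ (Zt ⁻¹' {z})) 0 with h0 | h0
  · rw [Measure.restrict_eq_zero.2 h0]
    simp [measureReal_def, h0]
  have hprob : IsProbabilityMeasure (μ[|Zt ⁻¹' {z}]) := cond_isProbabilityMeasure h0
  -- Independence keeps `U` uniform after conditioning on `Zt = z`.
  have hUz : ∀ v : Fin m → Bool, (μ[|Zt ⁻¹' {z}]) (U ⁻¹' {v}) = ((2 ^ m : ℕ) : ℝ≥0∞)⁻¹ := by
    intro v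
    rw [cond_apply (hfib z), hIndep.measure_inter_preimage_eq_mul _ _
      (measurableSet_singleton z) (measurableSet_singleton v), ← mul_assoc,
      ENNReal.inv_mul_cancel h0 (measure_ne_top _ _), one_mul, hU]
  have hbound := fixed_supersample_bound m hm s B hB ℓ hℓmeas hℓ (μ[|Zt ⁻¹' {z}]) W U hWm hUm hUz z
  have hL : ∫ ω in Zt ⁻¹' {z}, f ω ∂μ = μ.real (Zt ⁻¹' {z}) *
      ∫ ω, (RtestSS m s ℓ (W ω) z (U ω) - RtrainSS m s ℓ (W ω) z (U ω)) ^ 2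
        ∂(μ[|Zt ⁻¹' {z}]) := by
    have hne : μ.real (Zt ⁻¹' {z}) ≠ 0 := by
      simpa [measureReal_def, ENNReal.toReal_eq_zero_iff] using h0
    rw [ProbabilityTheory.cond, integral_smul_measure, ENNReal.toReal_inv, ← measureReal_def,
      smul_eq_mul, mul_inv_cancel_left₀ hne]
    refine setIntegral_congr_fun (hfib z) fun ω hω => ?_
    have : Zt ω = z := hω
    simp only [hf, this]
  rw [hL]
  exact mul_le_mul_of_nonneg_left hbound measureReal_nonneg
end
end

section
/- Case u = m, n = 2m. Let W be a 𝒲-valued random variable jointly distributed with (Z̃,U), and suppose 0 ≤ r(ŷ, y) ≤ B for all ŷ ∈ ℝ^K and y ∈ 𝒴. For each i define the loss difference Δ_i := ℓ(W, s(Z̃_{i,1})) − ℓ(W, s(Z̃_{i,0})) ∈ ℝ. Then | E_{W,Z̃,U}[ R_test(W,Z̃,U) − R_train(W,Z̃,U) ] | ≤ (B/m) · Σ_{i=1}^m E_{Z̃}[ sqrt( 2 · I^{Z̃}(Δ_i ; U_i) ) ]. -/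
/-!
Conditionally on a supersample `Z̃ = z̃`, the `i`-th summand of the test/train gap is
`(-1)^{U_i} Δ_i`, and by independence of `Z̃` and `U` the bit `U_i` is still a fair coin
(`coord_uniform`). Under the product of the conditional marginals this signed difference is
centred and `B`-sub-Gaussian, since `E exp(t (-1)^{U_i} Δ_i) = E cosh(t Δ_i) ≤ exp(t² B² / 2)`.
The Donsker–Varadhan inequality (`integral_le_klDivR`), optimized over `t`, therefore gives
`|E[(-1)^{U_i} Δ_i | z̃]| ≤ B √(2 I^{z̃}(Δ_i; U_i))` (`abs_integral_sign_le`). Averaging over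
`z̃` (`integral_eq_sum_cond`) and summing over `i` yields the bound.

The divergence is a Bochner integral, so finiteness matters: as `U_i` takes two equiprobable
values, the joint law is at most twice the product law, and the log-likelihood ratio is integrable.
-/

open MeasureTheory ProbabilityTheory Real
open scoped ENNReal

noncomputable section

/-- Convex duality (Young's inequality) between `h ↦ h log h - h` and `exp`. -/
lemma young_log_exp {h : ℝ} (hh : 0 ≤ h) (g : ℝ) :
    h * g ≤ h * Real.log h - h + Real.exp g := by
  rcases hh.eq_or_lt with rfl | hpos
  · simp [Real.exp_nonneg]
  · have h1 := Real.add_one_le_exp (g - Real.log h)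
    rw [Real.exp_sub, Real.exp_log hpos, le_div_iff₀ hpos] at h1
    nlinarith

/-- The Donsker–Varadhan inequality in the form `∫ g dμ ≤ D(μ ‖ ν)` whenever `∫ exp g dν ≤ 1`.
The domination `μ ≤ 2ν` bounds the density, so the real-valued integral `klDivR μ ν` is that
of an integrable function. -/
lemma integral_le_klDivR {α : Type*} [MeasurableSpace α] (μ ν : Measure α)
    [IsProbabilityMeasure μ] [IsProbabilityMeasure ν]
    (hle : ∀ t, MeasurableSet t → μ t ≤ 2 * ν t)
    (g : α → ℝ) (hg : Integrable g μ) (hexp : Integrable (fun x => Real.exp (g x)) ν)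
    (hexp1 : ∫ x, Real.exp (g x) ∂ν ≤ 1) :
    ∫ x, g x ∂μ ≤ klDivR μ ν := by
  have hac : μ ≪ ν := by
    refine Measure.AbsolutelyContinuous.mk fun t ht h0 => ?_
    have := hle t ht
    simpa [h0] using this
  have hbd : ∀ᵐ x ∂ν, μ.rnDeriv ν x ≤ 2 := by
    refine ae_le_of_forall_setLIntegral_le_of_sigmaFinite (Measure.measurable_rnDeriv μ ν)
      (g := fun _ => 2) fun t ht _ => ?_
    rw [Measure.setLIntegral_rnDeriv hac, setLIntegral_const]
    exact hle t ht
  set h : α → ℝ := fun x => (μ.rnDeriv ν x).toReal with hdef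
  have hmeas : Measurable h := (Measure.measurable_rnDeriv μ ν).ennreal_toReal
  have hbd' : ∀ᵐ x ∂ν, h x ≤ 2 := by
    filter_upwards [hbd] with x hx
    exact ENNReal.toReal_le_of_le_ofReal (by norm_num) (by simpa using hx)
  have hnn : ∀ x, 0 ≤ h x := fun x => ENNReal.toReal_nonneg
  have hhint : Integrable h ν := Measure.integrable_toReal_rnDeriv
  have hllr : Integrable (fun x => h x * Real.log (h x)) ν := by
    refine Integrable.of_bound (hmeas.mul hmeas.log).aestronglyMeasurable 4 ?_
    filter_upwards [hbd'] with x hx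
    rw [Real.norm_eq_abs, abs_le]
    have h0 := hnn x
    constructor
    -- `h log h ≥ h - 1` is Young's inequality at `g = 0`
    · have := young_log_exp h0 0
      simp only [mul_zero, Real.exp_zero] at this
      linarith
    · rcases h0.eq_or_lt with h00 | hpos
      · rw [← h00]; norm_num
      · have := Real.log_le_sub_one_of_pos hpos
        nlinarith
  have e1 : ∫ x, g x ∂μ = ∫ x, h x * g x ∂ν := by
    have := integral_rnDeriv_smul (f := g) hac
    simpa [hdef] using this.symm
  have e2 : klDivR μ ν = ∫ x, h x * Real.log (h x) ∂ν := by
    have := integral_rnDeriv_smul (f := llr μ ν) hac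
    simpa [hdef, klDivR, llr] using this.symm
  have e3 : ∫ x, h x ∂ν = 1 := by
    have := Measure.integral_toReal_rnDeriv hac
    simpa [hdef] using this
  have hgi : Integrable (fun x => h x * g x) ν := by
    have := (integrable_rnDeriv_smul_iff (f := g) hac).2 hg
    simpa [hdef] using this
  have key : ∫ x, h x * g x ∂ν ≤ ∫ x, (h x * Real.log (h x) - h x + Real.exp (g x)) ∂ν :=
    integral_mono hgi ((hllr.sub hhint).add hexp) fun x => young_log_exp (hnn x) (g x)
  have hsub : Integrable (fun x => h x * Real.log (h x) - h x) ν := hllr.sub hhint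
  rw [integral_add hsub hexp, integral_sub hllr hhint] at key
  rw [e1, e2]
  linarith

/-- If `V` is a fair coin, every event satisfies `P_{(D,V)} ≤ 2 · P_D ⊗ P_V`. -/
lemma map_pair_le_two_mul_prod {Ω : Type*} [MeasurableSpace Ω] (P : Measure Ω)
    [IsProbabilityMeasure P] (D : Ω → ℝ) (hD : Measurable D)
    (V : Ω → Bool) (hV : Measurable V) (hhalf : ∀ b, P (V ⁻¹' {b}) = 2⁻¹)
    (t : Set (ℝ × Bool)) (ht : MeasurableSet t) :
    P.map (fun ω => (D ω, V ω)) t ≤ 2 * ((P.map D).prod (P.map V)) t := by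
  have : IsProbabilityMeasure (P.map D) := Measure.isProbabilityMeasure_map hD.aemeasurable
  have : IsProbabilityMeasure (P.map V) := Measure.isProbabilityMeasure_map hV.aemeasurable
  have hsec : ∀ b : Bool, MeasurableSet ((fun x : ℝ => (x, b)) ⁻¹' t) :=
    fun b => measurable_prodMk_right ht
  rw [Measure.map_apply (hD.prodMk hV) ht, Measure.prod_apply_symm ht, lintegral_fintype]
  simp only [Measure.map_apply hD (hsec _), Measure.map_apply hV (measurableSet_singleton _),
    hhalf, Fintype.sum_bool]
  rw [← add_mul, mul_comm, mul_assoc, ENNReal.inv_mul_cancel (by norm_num) (by norm_num), mul_one]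
  refine (measure_mono ?_).trans (measure_union_le _ _)
  intro ω hω
  rcases hb : V ω with _ | _
  · right; simpa [hb] using hω
  · left; simpa [hb] using hω

/-- A fair coin `V` can correlate with the sign of a `[-B, B]`-valued `D` only at the cost of
mutual information: `|E[(-1)^V D]| ≤ B √(2 I(D; V))`. Under the product law `(-1)^V D` is
`B`-sub-Gaussian because `E exp(t (-1)^V D) = E cosh(t D) ≤ exp(t² B² / 2)`. -/
lemma abs_integral_sign_le {Ω : Type*} [MeasurableSpace Ω] (P : Measure Ω)
    [IsProbabilityMeasure P] (B : ℝ) (hB : 0 < B) (D : Ω → ℝ) (hD : Measurable D)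
    (hDB : ∀ ω, |D ω| ≤ B) (V : Ω → Bool) (hV : Measurable V)
    (hhalf : ∀ b, P (V ⁻¹' {b}) = 2⁻¹) :
    |∫ ω, (if V ω then -D ω else D ω) ∂P| ≤
      B * Real.sqrt (2 * klDivR (P.map fun ω => (D ω, V ω)) ((P.map D).prod (P.map V))) := by
  have : IsProbabilityMeasure (P.map D) := Measure.isProbabilityMeasure_map hD.aemeasurable
  have : IsProbabilityMeasure (P.map V) := Measure.isProbabilityMeasure_map hV.aemeasurable
  have : IsProbabilityMeasure (P.map fun ω => (D ω, V ω)) :=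
    Measure.isProbabilityMeasure_map (hD.prodMk hV).aemeasurable
  set E := ∫ ω, (if V ω then -D ω else D ω) ∂P with hE
  set I := klDivR (P.map fun ω => (D ω, V ω)) ((P.map D).prod (P.map V)) with hI
  have hsm : Measurable fun p : ℝ × Bool => if p.2 then -p.1 else p.1 :=
    Measurable.ite (measurable_snd (measurableSet_singleton true)) measurable_fst.neg
      measurable_fst
  have hbdD : ∀ᵐ x ∂(P.map D), |x| ≤ B :=
    (ae_map_iff hD.aemeasurable (measurableSet_le measurable_norm measurable_const)).2
      (Filter.Eventually.of_forall hDB)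
  have hbdN : ∀ᵐ p ∂((P.map D).prod (P.map V)), |p.1| ≤ B :=
    Measure.quasiMeasurePreserving_fst.ae hbdD
  have hint : Integrable (fun ω => if V ω then -D ω else D ω) P := by
    refine Integrable.of_bound (hsm.comp (hD.prodMk hV)).aestronglyMeasurable B
      (Filter.Eventually.of_forall fun ω => ?_)
    split_ifs <;> simpa using hDB ω
  have main : ∀ t : ℝ, t * E - t ^ 2 * B ^ 2 / 2 ≤ I := by
    intro t
    have hgm : Measurable fun p : ℝ × Bool =>
        t * (if p.2 then -p.1 else p.1) - t ^ 2 * B ^ 2 / 2 := (hsm.const_mul t).sub_const _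
    have hexpi : Integrable (fun p : ℝ × Bool =>
        Real.exp (t * (if p.2 then -p.1 else p.1) - t ^ 2 * B ^ 2 / 2))
        ((P.map D).prod (P.map V)) := by
      refine Integrable.of_bound hgm.exp.aestronglyMeasurable (Real.exp (|t| * B)) ?_
      filter_upwards [hbdN] with p hp
      rw [Real.norm_eq_abs, Real.abs_exp, Real.exp_le_exp]
      have h1 : t * (if p.2 then -p.1 else p.1) ≤ |t| * B := by
        refine (le_abs_self _).trans ?_
        rw [abs_mul]
        gcongr
        split_ifs <;> simpa using hp
      nlinarith [mul_nonneg (sq_nonneg t) (sq_nonneg B)]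
    have hexp1 : ∫ p, Real.exp (t * (if p.2 then -p.1 else p.1) - t ^ 2 * B ^ 2 / 2)
        ∂((P.map D).prod (P.map V)) ≤ 1 := by
      rw [integral_prod _ hexpi]
      have hVr : ∀ b, (P.map V).real {b} = 1 / 2 := fun b => by
        rw [measureReal_def, Measure.map_apply hV (measurableSet_singleton _), hhalf]
        simp
      have : ∀ᵐ x ∂(P.map D), ∫ b : Bool, Real.exp (t * (if b then -x else x)
          - t ^ 2 * B ^ 2 / 2) ∂(P.map V) ≤ 1 := by
        filter_upwards [hbdD] with x hx
        rw [integral_fintype .of_finite]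
        simp only [Fintype.sum_bool, hVr, if_true, Bool.false_eq_true, if_false, smul_eq_mul,
          Real.exp_sub]
        have h1 := Real.cosh_le_exp_half_sq (t * x)
        have h2 : Real.exp ((t * x) ^ 2 / 2) ≤ Real.exp (t ^ 2 * B ^ 2 / 2) := by
          rw [Real.exp_le_exp, mul_pow]
          have : x ^ 2 ≤ B ^ 2 := sq_le_sq' (abs_le.1 hx).1 (abs_le.1 hx).2
          gcongr
        rw [Real.cosh_eq] at h1
        rw [← mul_add, ← add_div, ← mul_div_assoc, div_le_one (Real.exp_pos _), mul_neg]
        linarith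
      calc _ ≤ ∫ _, (1 : ℝ) ∂(P.map D) :=
            integral_mono_ae hexpi.integral_prod_left (integrable_const _) this
        _ = 1 := by simp
    have hmp : AEMeasurable (fun ω => (D ω, V ω)) P := (hD.prodMk hV).aemeasurable
    have hgi : Integrable (fun p : ℝ × Bool =>
        t * (if p.2 then -p.1 else p.1) - t ^ 2 * B ^ 2 / 2) (P.map fun ω => (D ω, V ω)) := by
      rw [integrable_map_measure hgm.aestronglyMeasurable hmp]
      exact (hint.const_mul t).sub (integrable_const _)
    have := integral_le_klDivR _ _ (map_pair_le_two_mul_prod P D hD V hV hhalf) _ hgi hexpi hexp1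
    rw [integral_map hmp hgm.aestronglyMeasurable,
      integral_sub (hint.const_mul t) (integrable_const _), integral_const_mul] at this
    simpa using this
  -- the optimal parameter
  have h1 := main (E / B ^ 2)
  have hsq : E ^ 2 ≤ B ^ 2 * (2 * I) := by
    have h2 : E / B ^ 2 * E - (E / B ^ 2) ^ 2 * B ^ 2 / 2 = E ^ 2 / (2 * B ^ 2) := by
      field_simp; ring
    rw [h2, div_le_iff₀ (by positivity)] at h1
    linarith
  have := Real.abs_le_sqrt hsq
  rwa [Real.sqrt_mul (sq_nonneg B), Real.sqrt_sq hB.le] at this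

/-- Law of total expectation over the fibres of a random variable with finitely many values. -/
lemma integral_eq_sum_cond {Ω α : Type*} [MeasurableSpace Ω] [MeasurableSpace α] [Fintype α]
    [MeasurableSingletonClass α] (μ : Measure Ω) [IsProbabilityMeasure μ] (Z : Ω → α)
    (hZ : Measurable Z) (G : Ω → ℝ) (hG : Integrable G μ) :
    ∫ ω, G ω ∂μ = ∑ z, μ.real (Z ⁻¹' {z}) * ∫ ω, G ω ∂(μ[|Z ⁻¹' {z}]) := by
  classical
  have hs := sum_meas_smul_cond_fiber hZ μ
  have hle : ∀ z, μ (Z ⁻¹' {z}) • μ[|Z ⁻¹' {z}] ≤ μ := fun z => by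
    conv_rhs => rw [← hs]
    exact Finset.single_le_sum (f := fun z => μ (Z ⁻¹' {z}) • μ[|Z ⁻¹' {z}])
      (fun _ _ => Measure.zero_le _) (Finset.mem_univ z)
  conv_lhs => rw [← hs]
  rw [integral_finsetSum_measure fun z _ => hG.mono_measure (hle z)]
  simp [integral_smul_measure, measureReal_def]

/-- Each coordinate of a uniform bit string is a fair coin. -/
lemma coord_uniform {Ω : Type*} [MeasurableSpace Ω] {m : ℕ} (μ : Measure Ω)
    [IsProbabilityMeasure μ] (U : Ω → (Fin m → Bool)) (hUm : Measurable U)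
    (hU : ∀ v : Fin m → Bool, μ (U ⁻¹' {v}) = ((2 ^ m : ℕ) : ℝ≥0∞)⁻¹) (i : Fin m) (b : Bool) :
    μ (U ⁻¹' {v | v i = b}) = 2⁻¹ := by
  classical
  have hform : ∀ b, μ (U ⁻¹' {v | v i = b}) =
      ∑ v : Fin m → Bool, if v i = b then ((2 ^ m : ℕ) : ℝ≥0∞)⁻¹ else 0 := fun b => by
    have := sum_measure_preimage_singleton (μ := μ) (f := U)
      (Finset.univ.filter fun v : Fin m → Bool => v i = b)
      (fun y _ => hUm (measurableSet_singleton y))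
    rw [Finset.sum_filter] at this
    simp only [hU] at this
    rw [this]
    simp
  -- flipping the `i`-th bit exchanges the two events
  have hflip : μ (U ⁻¹' {v | v i = b}) = μ (U ⁻¹' {v | v i = !b}) := by
    have hinv : Function.Involutive fun v : Fin m → Bool => Function.update v i (!(v i)) :=
      fun v => by simp
    rw [hform, hform, ← Equiv.sum_comp hinv.toPerm]
    refine Finset.sum_congr rfl fun v _ => ?_
    cases b <;> simp
  have htot : μ (U ⁻¹' {v | v i = b}) + μ (U ⁻¹' {v | v i = !b}) = 1 := by
    have hc : U ⁻¹' {v | v i = !b} = (U ⁻¹' {v | v i = b})ᶜ := by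
      ext ω; cases b <;> simp
    rw [hc, measure_add_measure_compl (hUm (Set.toFinite _).measurableSet), measure_univ]
  rw [← hflip, ← two_mul] at htot
  exact ENNReal.eq_inv_of_mul_eq_one_left (by rwa [mul_comm])

theorem statement11 {Ω X Y 𝒲 : Type*} [MeasurableSpace Ω] [MeasurableSpace X]
    [MeasurableSpace Y] [MeasurableSpace 𝒲]
    (m K : ℕ) (hm : 1 ≤ m)
    (s : Fin (2 * m) → X × Y) (B : ℝ) (hB : 0 < B)
    -- the model prediction map and the criterion
    (f : 𝒲 → X → (Fin K → ℝ)) (hfmeas : Measurable fun p : 𝒲 × X => f p.1 p.2)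
    (r : (Fin K → ℝ) → Y → ℝ) (hrmeas : Measurable fun p : (Fin K → ℝ) × Y => r p.1 p.2)
    (hr : ∀ (yh : Fin K → ℝ) (y : Y), 0 ≤ r yh y ∧ r yh y ≤ B)
    (μ : Measure Ω) [IsProbabilityMeasure μ]
    (W : Ω → 𝒲) (Zt : Ω → (Fin m → Fin (2 * m) × Fin (2 * m))) (U : Ω → (Fin m → Bool))
    (hWm : Measurable W) (hZtm : Measurable Zt) (hUm : Measurable U)
    -- Z̃ is uniformly distributed on the set of transductive supersamples
    (hZt : ∀ zt, μ (Zt ⁻¹' {zt}) =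
      if IsSupersample m zt
        then ((Finset.univ.filter (IsSupersample m)).card : ℝ≥0∞)⁻¹ else 0)
    -- U is uniformly distributed on {0,1}^m
    (hU : ∀ v : Fin m → Bool, μ (U ⁻¹' {v}) = ((2 ^ m : ℕ) : ℝ≥0∞)⁻¹)
    -- Z̃ and U are independent
    (hIndep : IndepFun Zt U μ) :
    |∫ ω, (RtestSS m s (fun w p => r (f w p.1) p.2) (W ω) (Zt ω) (U ω)
        - RtrainSS m s (fun w p => r (f w p.1) p.2) (W ω) (Zt ω) (U ω)) ∂μ|
      ≤ (B / m) * ∑ i : Fin m, ∫ ω, Real.sqrt (2 *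
          condMI μ
            (fun ω' => r (f (W ω') (s ((Zt ω' i).2)).1) (s ((Zt ω' i).2)).2
                - r (f (W ω') (s ((Zt ω' i).1)).1) (s ((Zt ω' i).1)).2)
            (fun ω' => U ω' i) (Zt ⁻¹' {Zt ω})) ∂μ := by
  classical
  -- `Δ` is the loss difference and `G` its sign-flipped version, the `i`-th gap term
  let Δ : Fin m → Ω → ℝ := fun i ω' =>
    r (f (W ω') (s ((Zt ω' i).2)).1) (s ((Zt ω' i).2)).2
      - r (f (W ω') (s ((Zt ω' i).1)).1) (s ((Zt ω' i).1)).2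
  let G : Fin m → Ω → ℝ := fun i ω => if U ω i then -Δ i ω else Δ i ω
  have hZc : ∀ i, Measurable fun ω => Zt ω i := fun i => (measurable_pi_apply i).comp hZtm
  have hVm : ∀ i, Measurable fun ω => U ω i := fun i => (measurable_pi_apply i).comp hUm
  have hloss : ∀ k : Ω → Fin (2 * m), Measurable k →
      Measurable fun ω => r (f (W ω) (s (k ω)).1) (s (k ω)).2 := fun k hk => by
    have hsk : Measurable fun ω => s (k ω) := (measurable_of_finite s).comp hk
    exact hrmeas.comp ((hfmeas.comp (hWm.prodMk hsk.fst)).prodMk hsk.snd)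
  have hΔm : ∀ i, Measurable (Δ i) := fun i =>
    (hloss _ (hZc i).snd).sub (hloss _ (hZc i).fst)
  have hΔB : ∀ i ω, |Δ i ω| ≤ B := fun i ω => by
    have h1 := hr (f (W ω) (s ((Zt ω i).2)).1) (s ((Zt ω i).2)).2
    have h2 := hr (f (W ω) (s ((Zt ω i).1)).1) (s ((Zt ω i).1)).2
    rw [abs_le]
    constructor <;> simp only [Δ] <;> linarith
  have hGm : ∀ i, Measurable (G i) := fun i =>
    Measurable.ite (hVm i (measurableSet_singleton true)) (hΔm i).neg (hΔm i)
  have hGi : ∀ i, Integrable (G i) μ := fun i => by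
    refine Integrable.of_bound (hGm i).aestronglyMeasurable B
      (Filter.Eventually.of_forall fun ω => ?_)
    simp only [G]
    split_ifs <;> simpa using hΔB i ω
  have hgap : ∀ ω, RtestSS m s (fun w p => r (f w p.1) p.2) (W ω) (Zt ω) (U ω)
      - RtrainSS m s (fun w p => r (f w p.1) p.2) (W ω) (Zt ω) (U ω) = (∑ i, G i ω) / m := by
    intro ω
    rw [RtestSS, RtrainSS, ← sub_div, ← Finset.sum_sub_distrib]
    congr 1
    refine Finset.sum_congr rfl fun i _ => ?_
    simp only [G, Δ]
    split_ifs <;> ring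
  have hterm : ∀ i, |∫ ω, G i ω ∂μ| ≤ B * ∫ ω, Real.sqrt (2 *
      condMI μ (Δ i) (fun ω' => U ω' i) (Zt ⁻¹' {Zt ω})) ∂μ := by
    intro i
    have hR : ∫ ω, Real.sqrt (2 * condMI μ (Δ i) (fun ω' => U ω' i) (Zt ⁻¹' {Zt ω})) ∂μ =
        ∑ z, μ.real (Zt ⁻¹' {z}) *
          Real.sqrt (2 * condMI μ (Δ i) (fun ω' => U ω' i) (Zt ⁻¹' {z})) := by
      have : IsProbabilityMeasure (μ.map Zt) := Measure.isProbabilityMeasure_map hZtm.aemeasurable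
      have h1 := integral_map (μ := μ) hZtm.aemeasurable (f := fun z =>
        Real.sqrt (2 * condMI μ (Δ i) (fun ω' => U ω' i) (Zt ⁻¹' {z})))
        (measurable_of_finite _).aestronglyMeasurable
      rw [← h1, integral_fintype .of_finite]
      simp [measureReal_def, Measure.map_apply hZtm (measurableSet_singleton _)]
    rw [hR, integral_eq_sum_cond μ Zt hZtm (G i) (hGi i), Finset.mul_sum]
    refine (Finset.abs_sum_le_sum_abs _ _).trans (Finset.sum_le_sum fun z _ => ?_)
    rw [abs_mul, abs_of_nonneg measureReal_nonneg]
    rcases eq_or_ne (μ (Zt ⁻¹' {z})) 0 with h0 | h0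
    · simp [measureReal_def, h0]
    · have : IsProbabilityMeasure (μ[|Zt ⁻¹' {z}]) := cond_isProbabilityMeasure h0
      -- independence keeps `U_i` a fair coin after conditioning on the supersample
      have hhalf : ∀ b, μ[|Zt ⁻¹' {z}] ((fun ω => U ω i) ⁻¹' {b}) = 2⁻¹ := fun b => by
        have hpre : (fun ω => U ω i) ⁻¹' {b} = U ⁻¹' {v | v i = b} := rfl
        rw [cond_apply (hZtm (measurableSet_singleton z)), hpre,
          hIndep.measure_inter_preimage_eq_mul _ _ (measurableSet_singleton z)
            (Set.toFinite _).measurableSet, coord_uniform μ U hUm hU, ← mul_assoc,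
          ENNReal.inv_mul_cancel h0 (measure_ne_top _ _), one_mul]
      have := abs_integral_sign_le (μ[|Zt ⁻¹' {z}]) B hB (Δ i) (hΔm i) (hΔB i) _ (hVm i) hhalf
      calc _ ≤ μ.real (Zt ⁻¹' {z}) * (B *
            Real.sqrt (2 * condMI μ (Δ i) (fun ω' => U ω' i) (Zt ⁻¹' {z}))) :=
            mul_le_mul_of_nonneg_left this measureReal_nonneg
        _ = _ := by ring
  simp_rw [hgap]
  rw [integral_div, integral_finsetSum _ fun i _ => hGi i, abs_div, Nat.abs_cast,
    div_mul_eq_mul_div, Finset.mul_sum]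
  gcongr
  exact (Finset.abs_sum_le_sum_abs _ _).trans (Finset.sum_le_sum fun i _ => hterm i)

end
end
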